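/- For any game G with no cycle of total weight zero, any subset X of vertices, any val ∈ {MP, supΣ^X, infΣ^X}, and any vertex v, the optimal strategies realizing the val-value can be chosen independently of the starting vertex: there exist a single positional Min-strategy σ* and a single positional Max-strategy τ* such that for every vertex v, sup_{π ⊨ σ*, π from v} val(π) = inf_{π ⊨ τ*, π from v} val(π) = the val-value of v. -/

import Mathlib

/-!
Basic definitions for mean-payoff games: games, infinite paths, positional
strategies, the valuations MP, supΣ^X and infΣ^X, values of vertices,
zones N, P, ZN, ZP (also relative to a sub-arena), reduced games,
potentials and potential reductions, traps.
-/

/-- A game: a sinkless directed graph with integer weights, whose vertices are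
partitioned into Min-vertices (`IsMin`) and Max-vertices (`¬ IsMin`). -/
structure MPGame (V : Type*) where
  E : V → V → Prop
  w : V → V → ℤ
  IsMin : V → Prop
  sinkless : ∀ v, ∃ v', E v v'

namespace MPGame

variable {V : Type*}

/-- An infinite path in a game. -/
structure Path (G : MPGame V) where
  vert : ℕ → V
  adj : ∀ i, G.E (vert i) (vert (i + 1))

/-- The sum of the weights of the first `k` edges of a path. -/
def Path.wsum {G : MPGame V} (π : G.Path) (k : ℕ) : ℤ :=
  ∑ i ∈ Finset.range k, G.w (π.vert i) (π.vert (i + 1))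

/-- The tail of a path (drop the first vertex). -/
def Path.tail {G : MPGame V} (π : G.Path) : G.Path :=
  ⟨fun i => π.vert (i + 1), fun i => π.adj (i + 1)⟩

/-- A positional strategy `σ : V → V` is legal if it always follows an edge. -/
def Legal (G : MPGame V) (σ : V → V) : Prop := ∀ v, G.E v (σ v)

/-- Consistency of a path with a positional Min-strategy. -/
def Path.ConsMin {G : MPGame V} (π : G.Path) (σ : V → V) : Prop :=
  ∀ i, G.IsMin (π.vert i) → π.vert (i + 1) = σ (π.vert i)

/-- Consistency of a path with a positional Max-strategy. -/
def Path.ConsMax {G : MPGame V} (π : G.Path) (τ : V → V) : Prop :=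
  ∀ i, ¬ G.IsMin (π.vert i) → π.vert (i + 1) = τ (π.vert i)

/-- The mean-payoff valuation `MP(π) = limsup_k (1/k) ∑_{i<k} w_i`. -/
noncomputable def MP {G : MPGame V} (π : G.Path) : EReal :=
  Filter.limsup (fun k => (((π.wsum k : ℝ) / (k : ℝ)) : EReal)) Filter.atTop

/-- `supΣ^X(π) = sup_{k ≤ n_X} ∑_{i<k} w_i`, where `n_X` is the first hitting
time of `X` (all `k` if `X` is never hit). -/
noncomputable def supSigma {G : MPGame V} (X : Set V) (π : G.Path) : EReal :=
  ⨆ k : {k : ℕ // ∀ i < k, π.vert i ∉ X}, ((π.wsum k.1 : ℝ) : EReal)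

/-- `infΣ^X(π) = inf_{k ≤ n_X} ∑_{i<k} w_i`. -/
noncomputable def infSigma {G : MPGame V} (X : Set V) (π : G.Path) : EReal :=
  ⨅ k : {k : ℕ // ∀ i < k, π.vert i ∉ X}, ((π.wsum k.1 : ℝ) : EReal)

/-- `inf_σ sup_{π ⊨ σ, π from v} val(π)`, over legal positional Min-strategies. -/
noncomputable def minVal (G : MPGame V) (val : G.Path → EReal) (v : V) : EReal :=
  ⨅ σ : {σ : V → V // G.Legal σ},
    ⨆ π : {π : G.Path // π.vert 0 = v ∧ π.ConsMin σ.1}, val π.1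

/-- `sup_τ inf_{π ⊨ τ, π from v} val(π)`, over legal positional Max-strategies. -/
noncomputable def maxVal (G : MPGame V) (val : G.Path → EReal) (v : V) : EReal :=
  ⨆ τ : {τ : V → V // G.Legal τ},
    ⨅ π : {π : G.Path // π.vert 0 = v ∧ π.ConsMax τ.1}, val π.1

/-- The MP-value of a vertex. -/
noncomputable def MPval (G : MPGame V) (v : V) : EReal := G.minVal MP v

/-- The `supΣ^X`-value of a vertex. -/
noncomputable def supSigmaVal (G : MPGame V) (X : Set V) (v : V) : EReal :=
  G.minVal (supSigma X) v

/-- The `infΣ^X`-value of a vertex. -/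
noncomputable def infSigmaVal (G : MPGame V) (X : Set V) (v : V) : EReal :=
  G.minVal (infSigma X) v

/-- `G` has no cycle of total weight zero: no path repeats a vertex with the
same partial sum of weights. -/
def NoZeroCycle (G : MPGame V) : Prop :=
  ∀ (π : G.Path) (i j : ℕ), i < j → π.vert i = π.vert j → π.wsum i ≠ π.wsum j

/-- The zone `N` of the subgame of `G` induced on `D`: vertices whose
immediately optimal edges (within `D`) have weight `< 0`. -/
def NsetOn (G : MPGame V) (D : Set V) : Set V :=
  {v | v ∈ D ∧ ((G.IsMin v ∧ ∃ v' ∈ D, G.E v v' ∧ G.w v v' < 0) ∨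
      (¬ G.IsMin v ∧ ∀ v' ∈ D, G.E v v' → G.w v v' < 0))}

/-- The zone `P` of the subgame of `G` induced on `D`. -/
def PsetOn (G : MPGame V) (D : Set V) : Set V :=
  {v | v ∈ D ∧ ((¬ G.IsMin v ∧ ∃ v' ∈ D, G.E v v' ∧ 0 < G.w v v') ∨
      (G.IsMin v ∧ ∀ v' ∈ D, G.E v v' → 0 < G.w v v'))}

/-- The zone `N` of `G`. -/
def Nset (G : MPGame V) : Set V := G.NsetOn Set.univ

/-- The zone `P` of `G`. -/
def Pset (G : MPGame V) : Set V := G.PsetOn Set.univ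

/-- The zone `ZN` of the subgame of `G` induced on `D`: vertices from which
Min can force that an edge of weight `< 0` is visited before any edge of
weight `> 0` (staying within `D`). -/
inductive ZNr (G : MPGame V) (D : Set V) : V → Prop
  | minNeg (v v' : V) : v ∈ D → G.IsMin v → v' ∈ D → G.E v v' → G.w v v' < 0 →
      ZNr G D v
  | minZero (v v' : V) : v ∈ D → G.IsMin v → v' ∈ D → G.E v v' → G.w v v' = 0 →
      ZNr G D v' → ZNr G D v
  | max (v : V) : v ∈ D → ¬ G.IsMin v →
      (∀ v' ∈ D, G.E v v' → G.w v v' ≤ 0) →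
      (∀ v', v' ∈ D → G.E v v' → G.w v v' = 0 → ZNr G D v') →
      ZNr G D v

/-- The zone `ZP` of the subgame of `G` induced on `D`. -/
inductive ZPr (G : MPGame V) (D : Set V) : V → Prop
  | maxPos (v v' : V) : v ∈ D → ¬ G.IsMin v → v' ∈ D → G.E v v' → 0 < G.w v v' →
      ZPr G D v
  | maxZero (v v' : V) : v ∈ D → ¬ G.IsMin v → v' ∈ D → G.E v v' → G.w v v' = 0 →
      ZPr G D v' → ZPr G D v
  | min (v : V) : v ∈ D → G.IsMin v →
      (∀ v' ∈ D, G.E v v' → 0 ≤ G.w v v') →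
      (∀ v', v' ∈ D → G.E v v' → G.w v v' = 0 → ZPr G D v') →
      ZPr G D v

/-- The zone `ZN` of `G`. -/
def ZN (G : MPGame V) : V → Prop := G.ZNr Set.univ

/-- The zone `ZP` of `G`. -/
def ZP (G : MPGame V) : V → Prop := G.ZPr Set.univ

/-- The subgame of `G` induced on `D` is reduced: from every vertex of `ZN`,
Min can force that the first edge visited has weight `≤ 0` and leads into
`ZN`, and symmetrically for `ZP` and Max. -/
def ReducedOn (G : MPGame V) (D : Set V) : Prop :=
  (∀ v, G.ZNr D v →
     (G.IsMin v → ∃ v' ∈ D, G.E v v' ∧ G.w v v' ≤ 0 ∧ G.ZNr D v') ∧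
     (¬ G.IsMin v → ∀ v' ∈ D, G.E v v' → G.w v v' ≤ 0 ∧ G.ZNr D v')) ∧
  (∀ v, G.ZPr D v →
     (¬ G.IsMin v → ∃ v' ∈ D, G.E v v' ∧ 0 ≤ G.w v v' ∧ G.ZPr D v') ∧
     (G.IsMin v → ∀ v' ∈ D, G.E v v' → 0 ≤ G.w v v' ∧ G.ZPr D v'))

/-- `G` is reduced. -/
def Reduced (G : MPGame V) : Prop := G.ReducedOn Set.univ

/-- The subgame of `G` induced on `D` is positively reduced: `ZN = ∅`. -/
def PosReducedOn (G : MPGame V) (D : Set V) : Prop := ∀ v, ¬ G.ZNr D v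

/-- `A` is a trap for Min: a sinkless subgraph from which Min cannot escape. -/
def TrapForMin (G : MPGame V) (A : Set V) : Prop :=
  (∀ v ∈ A, ∃ v' ∈ A, G.E v v') ∧
  ∀ v ∈ A, G.IsMin v → ∀ v', G.E v v' → v' ∈ A

/-- `A` is a trap for Max: a sinkless subgraph from which Max cannot escape. -/
def TrapForMax (G : MPGame V) (A : Set V) : Prop :=
  (∀ v ∈ A, ∃ v' ∈ A, G.E v v') ∧
  ∀ v ∈ A, ¬ G.IsMin v → ∀ v', G.E v v' → v' ∈ A

/-- The potential reduction of `G` by the potential `φ`. -/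
def pot (G : MPGame V) (φ : V → ℤ) : MPGame V where
  E := G.E
  w := fun v v' => G.w v v' + φ v' - φ v
  IsMin := G.IsMin
  sinkless := G.sinkless

end MPGame

namespace MPGame

open Filter Topology

theorem sum_pow_mul_le {V : Type*} {q : ℕ → V} {a : ℕ → ℝ} {f : V → ℝ} {c : ℝ} (hc : 0 ≤ c)
    (h : ∀ i, a i + c * f (q (i + 1)) ≤ f (q i)) (k : ℕ) :
    ∑ i ∈ Finset.range k, c ^ i * a i + c ^ k * f (q k) ≤ f (q 0) := by
  induction k with
  | zero => simp
  | succ k ih =>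
    rw [Finset.sum_range_succ]
    have := mul_le_mul_of_nonneg_left (h k) (pow_nonneg hc k)
    rw [pow_succ]
    linarith

section Limit

variable {V : Type*} {l : Filter ℕ} [l.NeBot] {c : ℕ → ℝ} {f : ℕ → V → ℝ} {g : V → ℝ}

theorem sum_le_of_return (hc0 : ∀ n, 0 ≤ c n) (hc : Tendsto c l (𝓝 1))
    (hg : ∀ v, Tendsto (fun n => (1 - c n) * f n v) l (𝓝 (g v))) {q : ℕ → V} {a : ℕ → ℝ}
    (h : ∀ᶠ n in l, ∀ i, a i + c n * f n (q (i + 1)) ≤ f n (q i)) {k : ℕ} (hk : q k = q 0) :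
    ∑ i ∈ Finset.range k, a i ≤ k * g (q 0) := by
  have h1 : Tendsto (fun n => ∑ i ∈ Finset.range k, c n ^ i * a i) l
      (𝓝 (∑ i ∈ Finset.range k, 1 ^ i * a i)) :=
    tendsto_finsetSum _ fun i _ => (hc.pow i).mul_const _
  have h2 : Tendsto (fun n => (∑ i ∈ Finset.range k, c n ^ i) * ((1 - c n) * f n (q 0))) l
      (𝓝 ((∑ i ∈ Finset.range k, 1 ^ i) * g (q 0))) :=
    (tendsto_finsetSum _ fun i _ => hc.pow i).mul (hg _)
  have := le_of_tendsto_of_tendsto h1 h2 (h.mono fun n hn => by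
    have h3 := sum_pow_mul_le (hc0 n) hn k
    rw [hk] at h3
    have h4 := geom_sum_mul_neg (c n) k
    dsimp only
    rw [← mul_assoc, h4]
    linarith)
  simpa using this

theorem limit_le_of_edge (hc : Tendsto c l (𝓝 1)) (hc1 : ∀ n, c n ≤ 1)
    (hg : ∀ v, Tendsto (fun n => (1 - c n) * f n v) l (𝓝 (g v))) {u v : V} {a : ℝ}
    (h : ∀ᶠ n in l, a + c n * f n u ≤ f n v) : g u ≤ g v := by
  have h1 : Tendsto (fun n => (1 - c n) * a + c n * ((1 - c n) * f n u)) l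
      (𝓝 ((1 - 1) * a + 1 * g u)) :=
    (((tendsto_const_nhds.sub hc).mul_const _)).add (hc.mul (hg u))
  have := le_of_tendsto_of_tendsto h1 (hg v) (h.mono fun n hn => by
    have := mul_le_mul_of_nonneg_left hn (sub_nonneg.2 (hc1 n))
    dsimp only
    linarith)
  simpa using this

theorem exists_sum_le [Finite V] (hc0 : ∀ n, 0 ≤ c n) (hc1 : ∀ n, c n ≤ 1)
    (hc : Tendsto c l (𝓝 1))
    (hg : ∀ v, Tendsto (fun n => (1 - c n) * f n v) l (𝓝 (g v))) {q : ℕ → V} {a : ℕ → ℝ}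
    (h : ∀ᶠ n in l, ∀ i, a i + c n * f n (q (i + 1)) ≤ f n (q i)) :
    ∃ C : ℝ, ∀ k : ℕ, ∑ i ∈ Finset.range k, a i ≤ k * g (q 0) + C := by
  classical
  have hmono : ∀ i, g (q i) ≤ g (q 0) := by
    intro i
    induction i with
    | zero => rfl
    | succ i ih => exact (limit_le_of_edge hc hc1 hg (h.mono fun n hn => hn i)).trans ih
  let first : V → ℕ := fun u => sInf {i | q i = u}
  have hfirst : ∀ k, q (first (q k)) = q k ∧ first (q k) ≤ k := fun k =>
    ⟨Nat.sInf_mem (s := {i | q i = q k}) ⟨k, rfl⟩, Nat.sInf_le rfl⟩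
  obtain ⟨C, hC⟩ := (Set.finite_range fun u =>
    ∑ i ∈ Finset.range (first u), a i - first u * g (q 0)).bddAbove
  refine ⟨C, fun k => ?_⟩
  obtain ⟨h1, h2⟩ := hfirst k
  have h3 := hC ⟨q k, rfl⟩
  dsimp only at h3
  generalize first (q k) = m at *
  obtain ⟨d, rfl⟩ := Nat.exists_eq_add_of_le h2
  have h4 := sum_le_of_return (q := fun i => q (m + i)) (a := fun i => a (m + i)) (k := d)
    hc0 hc hg (h.mono fun n hn i => hn (m + i)) h1.symm
  have h5 := mul_le_mul_of_nonneg_left (hmono m) (Nat.cast_nonneg (α := ℝ) d)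
  rw [Finset.sum_range_add]
  push_cast
  simp only [add_zero] at h4
  linarith

end Limit

variable {V : Type*}

/-- An edge out of `v` that is best for the owner of `v`, when the payoff of moving to `u`
is `c u`. -/
theorem exists_best [Finite V] (G : MPGame V) {α : Type*} [LinearOrder α] (c : V → α) (v : V) :
    ∃ u, G.E v u ∧ (G.IsMin v → ∀ u', G.E v u' → c u ≤ c u') ∧
      (¬ G.IsMin v → ∀ u', G.E v u' → c u' ≤ c u) := by
  have hne : {u | G.E v u}.Nonempty := G.sinkless v
  by_cases hv : G.IsMin v
  · obtain ⟨u, hu, h⟩ := Set.exists_min_image {u | G.E v u} c (Set.toFinite _) hne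
    exact ⟨u, hu, fun _ => h, fun h' => absurd hv h'⟩
  · obtain ⟨u, hu, h⟩ := Set.exists_max_image {u | G.E v u} c (Set.toFinite _) hne
    exact ⟨u, hu, fun h' => absurd h' hv, fun _ => h⟩

/-- A best choice of the owner of `v`. -/
noncomputable def best [Finite V] (G : MPGame V) {α : Type*} [LinearOrder α] (c : V → α)
    (v : V) : V :=
  (G.exists_best c v).choose

section Best

variable [Finite V] (G : MPGame V) {α : Type*} [LinearOrder α] (c : V → α) {v : V}

theorem best_edge (v : V) : G.E v (G.best c v) := (G.exists_best c v).choose_spec.1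

theorem best_le (hv : G.IsMin v) {u : V} (hu : G.E v u) : c (G.best c v) ≤ c u :=
  (G.exists_best c v).choose_spec.2.1 hv u hu

theorem le_best (hv : ¬ G.IsMin v) {u : V} (hu : G.E v u) : c u ≤ c (G.best c v) :=
  (G.exists_best c v).choose_spec.2.2 hv u hu

end Best

theorem exists_discounted_fixed_point [Fintype V] (G : MPGame V) {c : ℝ} (hc0 : 0 ≤ c)
    (hc1 : c < 1) :
    ∃ f : V → ℝ, ∃ σ : V → V, G.Legal σ ∧ (∀ v, f v = G.w v (σ v) + c * f (σ v)) ∧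
      (∀ v u, G.E v u → G.IsMin v → f v ≤ G.w v u + c * f u) ∧
      (∀ v u, G.E v u → ¬ G.IsMin v → G.w v u + c * f u ≤ f v) := by
  obtain ⟨K, rfl⟩ : ∃ K : NNReal, (K : ℝ) = c := ⟨⟨c, hc0⟩, rfl⟩
  let cost : (V → ℝ) → V → V → ℝ := fun f v u => G.w v u + K * f u
  let T : (V → ℝ) → V → ℝ := fun f v => cost f v (G.best (cost f v) v)
  have hcost : ∀ f f' v u, cost f v u ≤ cost f' v u + K * dist f f' := by
    intro f f' v u
    have h1 : f u - f' u ≤ dist f f' := (le_abs_self _).trans (dist_le_pi_dist f f' u)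
    have := mul_le_mul_of_nonneg_left h1 hc0
    simp only [cost]
    linarith
  have hT : ∀ f f' v, T f v ≤ T f' v + K * dist f f' := by
    intro f f' v
    by_cases hv : G.IsMin v
    · exact (G.best_le (cost f v) hv (G.best_edge (cost f' v) v)).trans (hcost _ _ _ _)
    · refine (hcost f f' v _).trans ?_
      have := G.le_best (cost f' v) hv (G.best_edge (cost f v) v)
      simp only [T]
      linarith
  have hK : ContractingWith K T := by
    refine ⟨by exact_mod_cast hc1, LipschitzWith.of_dist_le_mul fun f f' => ?_⟩
    refine (dist_pi_le_iff (by positivity)).2 fun v => ?_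
    rw [Real.dist_eq, abs_le]
    have h1 := hT f f' v
    have h2 := hT f' f v
    rw [dist_comm] at h2
    constructor <;> linarith
  have hf : ∀ v, T (ContractingWith.fixedPoint T hK) v = ContractingWith.fixedPoint T hK v :=
    fun v => congrFun hK.fixedPoint_isFixedPt v
  generalize ContractingWith.fixedPoint T hK = f at hf
  refine ⟨f, fun v => G.best (cost f v) v, fun v => G.best_edge _ v, fun v => (hf v).symm,
    fun v u hu hv => ?_, fun v u hu hv => ?_⟩
  · rw [← hf v]
    exact G.best_le (cost f v) hv hu
  · rw [← hf v]
    exact G.le_best (cost f v) hv hu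

theorem exists_abs_discounted_le [Finite V] (G : MPGame V) :
    ∃ W : ℝ, ∀ (c : ℝ) (f : V → ℝ) (σ : V → V), 0 ≤ c →
      (∀ v, f v = G.w v (σ v) + c * f (σ v)) → ∀ v, (1 - c) * |f v| ≤ W := by
  obtain ⟨W, hW⟩ := (Set.finite_range fun e : V × V => |(G.w e.1 e.2 : ℝ)|).bddAbove
  refine ⟨W, fun c f σ hc0 hf v => ?_⟩
  have : Nonempty V := ⟨v⟩
  obtain ⟨x, hx⟩ := Finite.exists_max fun v => |f v|
  have h1 : |(G.w x (σ x) : ℝ)| ≤ W := hW ⟨(x, σ x), rfl⟩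
  have h2 : |f x| ≤ |(G.w x (σ x) : ℝ)| + c * |f (σ x)| := by
    conv_lhs => rw [hf x]
    refine (abs_add_le _ _).trans_eq ?_
    rw [abs_mul, abs_of_nonneg hc0]
  have h3 := mul_le_mul_of_nonneg_left (hx (σ x)) hc0
  have h4 : (1 - c) * |f x| ≤ W := by linarith
  by_cases hc1 : c ≤ 1
  · exact (mul_le_mul_of_nonneg_left (hx v) (by linarith)).trans h4
  · refine le_trans ?_ ((abs_nonneg _).trans h1)
    exact mul_nonpos_of_nonpos_of_nonneg (by linarith) (abs_nonneg _)

theorem Path.cast_wsum {G : MPGame V} (π : G.Path) (k : ℕ) :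
    (π.wsum k : ℝ) = ∑ i ∈ Finset.range k, (G.w (π.vert i) (π.vert (i + 1)) : ℝ) := by
  simp [Path.wsum]

/-- Mean-payoff values `g`, as limits of discounted values, with an optimal strategy for
both players and a potential `p` witnessing negative values. -/
theorem exists_mean_payoff_values [Fintype V] (G : MPGame V) :
    ∃ σ : V → V, ∃ g p : V → ℝ, G.Legal σ ∧
      (∀ v u, G.E v u → (G.IsMin v → u = σ v) →
        g u ≤ g v ∧ (g u < 0 → G.w v u + p u ≤ p v)) ∧
      (∀ v u, G.E v u → (¬ G.IsMin v → u = σ v) → g v ≤ g u) ∧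
      (∀ π : G.Path, π.ConsMin σ → ∃ C : ℝ, ∀ k : ℕ,
        (π.wsum k : ℝ) ≤ k * g (π.vert 0) + C) ∧
      (∀ π : G.Path, π.ConsMax σ → ∃ C : ℝ, ∀ k : ℕ,
        k * g (π.vert 0) - C ≤ (π.wsum k : ℝ)) := by
  let c : ℕ → ℝ := fun n => 1 - 1 / ((n : ℝ) + 1)
  have hc0 : ∀ n, 0 ≤ c n := fun n => by
    have : 1 / ((n : ℝ) + 1) ≤ 1 := by
      rw [div_le_one (by positivity)]
      linarith [Nat.cast_nonneg (α := ℝ) n]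
    simp only [c]
    linarith
  have hc1 : ∀ n, c n < 1 := fun n => sub_lt_self _ (by positivity)
  let l : Ultrafilter ℕ := hyperfilter ℕ
  have hc : Tendsto c l (𝓝 1) := by
    have := (tendsto_const_nhds (x := (1 : ℝ))).sub
      (tendsto_one_div_add_atTop_nhds_zero_nat (𝕜 := ℝ))
    rw [sub_zero] at this
    exact this.mono_left Nat.hyperfilter_le_atTop
  choose f s hs hf hmin hmax using fun n => G.exists_discounted_fixed_point (hc0 n) (hc1 n)
  obtain ⟨W, hW⟩ := G.exists_abs_discounted_le
  have hlim : ∀ v, ∃ x, Tendsto (fun n => (1 - c n) * f n v) l (𝓝 x) := by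
    intro v
    obtain ⟨x, -, hx⟩ := (isCompact_Icc (a := -W) (b := W)).ultrafilter_le_nhds
      (l.map fun n => (1 - c n) * f n v) (by
        refine le_principal_iff.2 (mem_map.2 (Eventually.of_forall fun n => ?_))
        rw [Set.mem_Icc, ← abs_le, abs_mul,
          abs_of_pos (sub_pos.2 (hc1 n))]
        exact hW _ _ _ (hc0 n) (hf n) v)
    exact ⟨x, hx⟩
  choose g hg using hlim
  obtain ⟨σ, hσ⟩ : ∃ σ, ∀ᶠ n in l, s n = σ := by
    by_contra! h
    have h' : ∀ᶠ n in l, ∀ σ, s n ≠ σ := by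
      rw [eventually_all]
      exact h
    obtain ⟨n, hn⟩ := h'.exists
    exact hn _ rfl
  have hedge : ∀ᶠ n in l, ∀ v u, G.E v u → (G.IsMin v → u = σ v) →
      G.w v u + c n * f n u ≤ f n v := by
    filter_upwards [hσ] with n hn v u huv hu
    by_cases hv : G.IsMin v
    · rw [hu hv, ← hn, ← hf]
    · exact hmax n v u huv hv
  have hedge' : ∀ᶠ n in l, ∀ v u, G.E v u → (¬ G.IsMin v → u = σ v) →
      f n v ≤ G.w v u + c n * f n u := by
    filter_upwards [hσ] with n hn v u huv hu
    by_cases hv : G.IsMin v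
    · exact hmin n v u huv hv
    · rw [hu hv, ← hn, ← hf]
  have hg' : ∀ v, Tendsto (fun n => (1 - c n) * (-f n v)) l (𝓝 (-g v)) := fun v => by
    simpa only [mul_neg] using (hg v).neg
  have hneg : ∀ᶠ n in l, ∀ v, g v < 0 → f n v < 0 := by
    rw [eventually_all]
    intro v
    by_cases hv : g v < 0
    · filter_upwards [(hg v).eventually_lt_const hv] with n hn _
      by_contra! h
      exact hn.not_ge (mul_nonneg (sub_pos.2 (hc1 n)).le h)
    · exact Eventually.of_forall fun n h => absurd h hv
  obtain ⟨N, hN, hN'⟩ := (hedge.and hneg).exists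
  obtain ⟨n₀, hn₀⟩ := hσ.exists
  refine ⟨σ, g, f N, hn₀ ▸ hs n₀, fun v u huv hu => ⟨?_, fun hgu => ?_⟩,
    fun v u huv hu => ?_, fun π hπ => ?_, fun π hπ => ?_⟩
  · exact limit_le_of_edge hc (fun n => (hc1 n).le) hg (hedge.mono fun n hn => hn v u huv hu)
  · have h1 := hN v u huv hu
    have h2 := mul_pos_of_neg_of_neg (sub_neg.2 (hc1 N)) (hN' u hgu)
    linarith
  · refine neg_le_neg_iff.1 (limit_le_of_edge (a := -G.w v u) hc (fun n => (hc1 n).le) hg' ?_)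
    refine hedge'.mono fun n hn => ?_
    have := hn v u huv hu
    linarith
  · simp only [Path.cast_wsum]
    exact exists_sum_le hc0 (fun n => (hc1 n).le) hc hg
      (hedge.mono fun n hn i => hn _ _ (π.adj i) (hπ i))
  · obtain ⟨C, hC⟩ := exists_sum_le (q := π.vert)
      (a := fun i => -(G.w (π.vert i) (π.vert (i + 1)) : ℝ)) hc0 (fun n => (hc1 n).le) hc hg'
      (hedge'.mono fun n hn i => by
        have := hn _ _ (π.adj i) (hπ i)
        linarith)
    refine ⟨C, fun k => ?_⟩
    have := hC k
    rw [Finset.sum_neg_distrib, ← Path.cast_wsum] at this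
    linarith

/-- The path that remains after the first `n` edges of `π`. -/
def Path.drop {G : MPGame V} (π : G.Path) (n : ℕ) : G.Path :=
  ⟨fun i => π.vert (n + i), fun i => π.adj (n + i)⟩

theorem Path.wsum_add {G : MPGame V} (π : G.Path) (n k : ℕ) :
    π.wsum (n + k) = π.wsum n + (π.drop n).wsum k :=
  Finset.sum_range_add _ _ _

theorem Path.wsum_succ {G : MPGame V} (π : G.Path) (n : ℕ) :
    π.wsum (n + 1) = π.wsum n + G.w (π.vert n) (π.vert (n + 1)) :=
  Finset.sum_range_succ _ _

theorem NoZeroCycle.not_bounded [Finite V] {G : MPGame V} (hz : G.NoZeroCycle) (π : G.Path)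
    {a b : ℝ} (ha : ∀ k, a ≤ π.wsum k) (hb : ∀ k, (π.wsum k : ℝ) ≤ b) : False := by
  let F : ℕ → V × Set.Icc ⌈a⌉ ⌊b⌋ := fun k =>
    (π.vert k, ⟨π.wsum k, Int.ceil_le.2 (ha k), Int.le_floor.2 (hb k)⟩)
  refine not_injective_infinite_finite F fun i j hij => ?_
  obtain ⟨hv, hw⟩ : π.vert i = π.vert j ∧ π.wsum i = π.wsum j := by
    exact ⟨congrArg Prod.fst hij, congrArg (fun x => (x.2 : ℤ)) hij⟩
  rcases lt_trichotomy i j with h | h | h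
  · exact absurd hw (hz π i j h hv)
  · exact h
  · exact absurd hw.symm (hz π j i h hv.symm)

open Classical in
/-- The game in which every vertex of `X` is replaced by a sink with a loop of weight `-1`. -/
noncomputable def absorb (G : MPGame V) (X : Set V) : MPGame V where
  E v u := (v ∈ X → u = v) ∧ (v ∉ X → G.E v u)
  w v u := if v ∈ X then -1 else G.w v u
  IsMin := G.IsMin
  sinkless v := by
    obtain ⟨u, hu⟩ := G.sinkless v
    by_cases hv : v ∈ X
    · exact ⟨v, fun _ => rfl, fun h => absurd hv h⟩
    · exact ⟨u, fun h => absurd h hv, fun _ => hu⟩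

theorem absorb_edge {G : MPGame V} {X : Set V} {v u : V} (hv : v ∉ X) (h : G.E v u) :
    (G.absorb X).E v u :=
  ⟨fun h' => absurd h' hv, fun _ => h⟩

theorem absorb_w {G : MPGame V} {X : Set V} {v u : V} (hv : v ∉ X) :
    (G.absorb X).w v u = G.w v u :=
  if_neg hv

/-- A path avoiding `X`, viewed in the game where `X` is absorbing. -/
def Path.toAbsorb {G : MPGame V} {X : Set V} (π : G.Path) (h : ∀ i, π.vert i ∉ X) :
    (G.absorb X).Path :=
  ⟨π.vert, fun i => absorb_edge (h i) (π.adj i)⟩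

theorem Path.toAbsorb_wsum {G : MPGame V} {X : Set V} (π : G.Path) (h : ∀ i, π.vert i ∉ X)
    (k : ℕ) : (π.toAbsorb h).wsum k = π.wsum k :=
  Finset.sum_congr rfl fun i _ => absorb_w (h i)

/-- Before reaching `X`, Max can force positive mean payoff where `0 < g`, and Min can force
negative mean payoff where `g < 0`. -/
theorem exists_absorb_values [Fintype V] (G : MPGame V) (hz : G.NoZeroCycle) (X : Set V) :
    ∃ σ : V → V, ∃ g p : V → ℝ, (∀ v ∉ X, G.E v (σ v)) ∧ (∀ v ∈ X, g v < 0) ∧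
      (∀ v, g v ≠ 0) ∧
      (∀ v ∉ X, ∀ u, G.E v u → (G.IsMin v → u = σ v) →
        g u ≤ g v ∧ (g u < 0 → G.w v u + p u ≤ p v)) ∧
      (∀ v ∉ X, ∀ u, G.E v u → (¬ G.IsMin v → u = σ v) → g v ≤ g u) ∧
      (∀ π : G.Path, (∀ i, π.vert i ∉ X) → π.ConsMax σ → ∃ C : ℝ, ∀ k : ℕ,
        k * g (π.vert 0) - C ≤ (π.wsum k : ℝ)) := by
  obtain ⟨σ, g, p, hσ, hmin, hmax, hle, hge⟩ := (G.absorb X).exists_mean_payoff_values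
  have hmin' : ∀ v ∉ X, ∀ u, G.E v u → (G.IsMin v → u = σ v) →
      g u ≤ g v ∧ (g u < 0 → G.w v u + p u ≤ p v) := fun v hv u huv hu => by
    have := hmin v u (absorb_edge hv huv) hu
    rwa [absorb_w hv] at this
  have hmax' : ∀ v ∉ X, ∀ u, G.E v u → (¬ G.IsMin v → u = σ v) → g v ≤ g u :=
    fun v hv u huv hu => hmax v u (absorb_edge hv huv) hu
  have hX : ∀ v ∈ X, g v < 0 := by
    intro v hv
    let π : (G.absorb X).Path := ⟨fun _ => v, fun _ => ⟨fun _ => rfl, fun h => absurd hv h⟩⟩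
    obtain ⟨C, hC⟩ := hge π fun i _ => ((hσ v).1 hv).symm
    obtain ⟨k, hk⟩ := exists_nat_gt C
    have h1 : π.wsum k = -(k : ℤ) := by
      simp [Path.wsum, π, absorb, hv]
    have h2 := hC k
    rw [h1] at h2
    push_cast at h2
    by_contra! h3
    have := mul_nonneg (Nat.cast_nonneg (α := ℝ) k) h3
    change (k : ℝ) * g v - C ≤ -k at h2
    linarith
  refine ⟨σ, g, p, fun v hv => (hσ v).2 hv, hX, fun v hv => ?_, hmin', hmax',
    fun π hπX hπ => ?_⟩
  · have hq : ∀ i, g (σ^[i] v) = 0 := by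
      intro i
      induction i with
      | zero => exact hv
      | succ i ih =>
        rw [Function.iterate_succ_apply', ← ih]
        exact le_antisymm (hmin _ _ (hσ _) fun _ => rfl).1 (hmax _ _ (hσ _) fun _ => rfl)
    have hqX : ∀ i, σ^[i] v ∉ X := fun i h => (hX _ h).ne (hq i)
    have hsucc : ∀ i, σ^[i + 1] v = σ (σ^[i] v) := fun i => Function.iterate_succ_apply' σ i v
    let π : G.Path := ⟨fun i => σ^[i] v, fun i => by
      rw [hsucc]
      exact (hσ _).2 (hqX i)⟩
    obtain ⟨C, hC⟩ := hle (π.toAbsorb hqX) fun i _ => hsucc i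
    obtain ⟨C', hC'⟩ := hge (π.toAbsorb hqX) fun i _ => hsucc i
    refine hz.not_bounded π (a := -C') (b := C) (fun k => ?_) fun k => ?_
    · have := hC' k
      rw [Path.toAbsorb_wsum] at this
      change (k : ℝ) * g v - C' ≤ _ at this
      rw [hv] at this
      linarith
    · have := hC k
      rw [Path.toAbsorb_wsum] at this
      change _ ≤ (k : ℝ) * g v + C at this
      rw [hv] at this
      linarith
  · obtain ⟨C, hC⟩ := hge (π.toAbsorb hπX) hπ
    simp only [Path.toAbsorb_wsum] at hC
    exact ⟨C, hC⟩

/-- Both players have positional strategies, optimal from every vertex, that guarantee a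
common payoff `f` for `val`. -/
def UniformlyDetermined (G : MPGame V) (val : G.Path → EReal) : Prop :=
  ∃ σ τ : V → V, G.Legal σ ∧ G.Legal τ ∧ ∃ f : V → EReal,
    (∀ π : G.Path, π.ConsMin σ → val π ≤ f (π.vert 0)) ∧
    (∀ π : G.Path, π.ConsMax τ → f (π.vert 0) ≤ val π)

theorem exists_path [Finite V] (G : MPGame V) {σ τ : V → V} (hσ : G.Legal σ) (hτ : G.Legal τ)
    (v : V) : ∃ π : G.Path, π.vert 0 = v ∧ π.ConsMin σ ∧ π.ConsMax τ := by
  classical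
  let ρ : V → V := fun v => if G.IsMin v then σ v else τ v
  have hρ : ∀ i, ρ^[i + 1] v = ρ (ρ^[i] v) := fun i => Function.iterate_succ_apply' ρ i v
  refine ⟨⟨fun i => ρ^[i] v, fun i => ?_⟩, rfl, fun i hi => ?_, fun i hi => ?_⟩
  · rw [hρ]
    by_cases h : G.IsMin (ρ^[i] v)
    · simpa only [ρ, if_pos h] using hσ _
    · simpa only [ρ, if_neg h] using hτ _
  · exact (hρ i).trans (if_pos hi)
  · exact (hρ i).trans (if_neg hi)

theorem UniformlyDetermined.exists_optimal [Finite V] {G : MPGame V} {val : G.Path → EReal}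
    (h : G.UniformlyDetermined val) :
    ∃ σ τ : V → V, G.Legal σ ∧ G.Legal τ ∧ ∀ v : V,
      (⨆ π : {π : G.Path // π.vert 0 = v ∧ π.ConsMin σ}, val π.1) = G.minVal val v ∧
      (⨅ π : {π : G.Path // π.vert 0 = v ∧ π.ConsMax τ}, val π.1) = G.minVal val v := by
  obtain ⟨σ, τ, hσ, hτ, f, hle, hge⟩ := h
  refine ⟨σ, τ, hσ, hτ, fun v => ?_⟩
  have h1 : G.minVal val v ≤
      ⨆ π : {π : G.Path // π.vert 0 = v ∧ π.ConsMin σ}, val π.1 :=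
    iInf_le (fun σ : {σ : V → V // G.Legal σ} =>
      ⨆ π : {π : G.Path // π.vert 0 = v ∧ π.ConsMin σ.1}, val π.1) ⟨σ, hσ⟩
  have h2 : (⨆ π : {π : G.Path // π.vert 0 = v ∧ π.ConsMin σ}, val π.1) ≤ f v :=
    iSup_le fun ⟨π, hv, hπ⟩ => hv ▸ hle π hπ
  have h3 : f v ≤ ⨅ π : {π : G.Path // π.vert 0 = v ∧ π.ConsMax τ}, val π.1 :=
    le_iInf fun ⟨π, hv, hπ⟩ => hv ▸ hge π hπ
  have h4 : (⨅ π : {π : G.Path // π.vert 0 = v ∧ π.ConsMax τ}, val π.1) ≤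
      G.minVal val v := by
    refine le_iInf fun ⟨σ', hσ'⟩ => ?_
    obtain ⟨π, hv, hπ, hπ'⟩ := G.exists_path hσ' hτ v
    exact (iInf_le (fun π : {π : G.Path // π.vert 0 = v ∧ π.ConsMax τ} => val π.1)
      ⟨π, hv, hπ'⟩).trans
      (le_iSup (fun π : {π : G.Path // π.vert 0 = v ∧ π.ConsMin σ'} => val π.1) ⟨π, hv, hπ⟩)
  exact ⟨le_antisymm (h2.trans (h3.trans h4)) h1, le_antisymm h4 (h1.trans (h2.trans h3))⟩

theorem tendsto_coe_add_div (a C : ℝ) :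
    Tendsto (fun k : ℕ => ((a + C / k : ℝ) : EReal)) atTop (𝓝 a) := by
  refine continuous_coe_real_ereal.continuousAt.tendsto.comp ?_
  simpa using tendsto_const_nhds.add (tendsto_const_div_atTop_nhds_zero_nat C)

theorem MP_le {G : MPGame V} {π : G.Path} {a C : ℝ} (h : ∀ k : ℕ, (π.wsum k : ℝ) ≤ k * a + C) :
    MP π ≤ a := by
  rw [← (tendsto_coe_add_div a C).limsup_eq]
  refine limsup_le_limsup ?_
  filter_upwards [eventually_gt_atTop 0] with k hk
  have hk' : (0 : ℝ) < k := Nat.cast_pos.2 hk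
  rw [← EReal.coe_div, EReal.coe_le_coe_iff, div_le_iff₀ hk', add_mul, div_mul_cancel₀ _ hk'.ne']
  linarith [h k]

theorem le_MP {G : MPGame V} {π : G.Path} {a C : ℝ} (h : ∀ k : ℕ, k * a - C ≤ (π.wsum k : ℝ)) :
    a ≤ MP π := by
  rw [← (tendsto_coe_add_div a (-C)).limsup_eq]
  refine limsup_le_limsup ?_
  filter_upwards [eventually_gt_atTop 0] with k hk
  have hk' : (0 : ℝ) < k := Nat.cast_pos.2 hk
  rw [← EReal.coe_div, EReal.coe_le_coe_iff, le_div_iff₀ hk', add_mul, div_mul_cancel₀ _ hk'.ne']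
  linarith [h k]

theorem uniformlyDetermined_MP [Fintype V] (G : MPGame V) : G.UniformlyDetermined MP := by
  obtain ⟨σ, g, p, hσ, -, -, hle, hge⟩ := G.exists_mean_payoff_values
  refine ⟨σ, σ, hσ, hσ, fun v => g v, fun π hπ => ?_, fun π hπ => ?_⟩
  · obtain ⟨C, hC⟩ := hle π hπ
    exact MP_le hC
  · obtain ⟨C, hC⟩ := hge π hπ
    exact le_MP hC

/-- The payoff of moving from `v` to `u` and then collecting `f u`. -/
noncomputable def step (G : MPGame V) (f : V → EReal) (v u : V) : EReal :=
  ((G.w v u : ℝ) : EReal) + f u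

open Classical in
/-- The operator whose fixed points are candidate `supΣ^X`-values. -/
noncomputable def supSigmaStep [Finite V] (G : MPGame V) (X : Set V) :
    (V → EReal) →o (V → EReal) where
  toFun f v := if v ∈ X then 0 else max 0 (G.step f v (G.best (G.step f v) v))
  monotone' f f' h v := by
    have hs : ∀ u, G.step f v u ≤ G.step f' v u := fun u => add_le_add_right (h u) _
    dsimp only
    split_ifs
    · rfl
    · refine max_le_max le_rfl ?_
      by_cases hv : G.IsMin v
      · exact (G.best_le (G.step f v) hv (G.best_edge _ v)).trans (hs _)
      · exact (hs _).trans (G.le_best (G.step f' v) hv (G.best_edge _ v))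

theorem le_supSigma {G : MPGame V} {X : Set V} {π : G.Path} {k : ℕ}
    (hk : ∀ i < k, π.vert i ∉ X) : ((π.wsum k : ℝ) : EReal) ≤ supSigma X π :=
  le_iSup (fun k : {k : ℕ // ∀ i < k, π.vert i ∉ X} => ((π.wsum k.1 : ℝ) : EReal)) ⟨k, hk⟩

theorem coe_wsum_succ {G : MPGame V} (π : G.Path) (k : ℕ) (f : V → EReal) :
    ((π.wsum k : ℝ) : EReal) + G.step f (π.vert k) (π.vert (k + 1)) =
      ((π.wsum (k + 1) : ℝ) : EReal) + f (π.vert (k + 1)) := by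
  rw [Path.wsum_succ, step, ← add_assoc, Int.cast_add, EReal.coe_add]

theorem supSigma_eq_top {G : MPGame V} {X : Set V} {π : G.Path} {k : ℕ}
    (hk : ∀ i < k, π.vert i ∉ X) (hX : ∀ i, (π.drop k).vert i ∉ X) {a C : ℝ} (ha : 0 < a)
    (h : ∀ m : ℕ, m * a - C ≤ ((π.drop k).wsum m : ℝ)) : supSigma X π = ⊤ := by
  refine EReal.eq_top_iff_forall_lt _ |>.2 fun y => ?_
  obtain ⟨m, hm⟩ := exists_nat_gt ((y + C - π.wsum k) / a)
  rw [div_lt_iff₀ ha] at hm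
  refine lt_of_lt_of_le ?_ (le_supSigma (k := k + m) fun i hi => ?_)
  · rw [EReal.coe_lt_coe_iff, Path.wsum_add, Int.cast_add]
    linarith [h m]
  · rcases lt_or_ge i k with hik | hik
    · exact hk i hik
    · obtain ⟨d, rfl⟩ := Nat.exists_eq_add_of_le hik
      exact hX d

theorem uniformlyDetermined_supSigma [Fintype V] (G : MPGame V) (hz : G.NoZeroCycle)
    (X : Set V) : G.UniformlyDetermined (supSigma X) := by
  classical
  obtain ⟨σ, g, p, hσ, hgX, hg0, hmin, hmax, hge⟩ := G.exists_absorb_values hz X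
  obtain ⟨M, hM⟩ := (Set.finite_range fun v => |p v|).bddAbove
  have hM : ∀ v, |p v| ≤ M := fun v => hM ⟨v, rfl⟩
  obtain ⟨f, hf, hfle⟩ : ∃ f, G.supSigmaStep X f = f ∧
      ∀ f', G.supSigmaStep X f' ≤ f' → f ≤ f' :=
    ⟨_, OrderHom.map_lfp _, fun f' h => OrderHom.lfp_le _ h⟩
  have hfX : ∀ v ∈ X, f v = 0 := fun v hv => by
    rw [← hf]
    exact if_pos hv
  let s : V → V := fun v => G.best (G.step f v) v
  have hfs : ∀ v ∉ X, f v = max 0 (G.step f v (s v)) := fun v hv => by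
    conv_lhs => rw [← hf]
    exact if_neg hv
  have hf0 : ∀ v, 0 ≤ f v := fun v => by
    by_cases hv : v ∈ X
    · exact (hfX v hv).ge
    · rw [hfs v hv]
      exact le_max_left _ _
  have hfM : ∀ v, g v < 0 → f v ≤ (M + M : ℝ) := by
    let H : V → EReal := fun v => if g v < 0 then ((p v + M : ℝ) : EReal) else ⊤
    have hH : f ≤ H := by
      refine hfle H fun v => ?_
      by_cases hv : g v < 0
      · have h0 : (0 : EReal) ≤ H v := by
          simp only [H, if_pos hv]
          exact_mod_cast (by linarith [neg_le_of_abs_le (hM v)] : 0 ≤ p v + M)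
        by_cases hvX : v ∈ X
        · exact (if_pos hvX).trans_le h0
        · refine (if_neg hvX).trans_le (max_le h0 ?_)
          have key : ∀ u, G.E v u → (G.IsMin v → u = σ v) → G.step H v u ≤ H v := by
            intro u huv hu
            obtain ⟨h1, h2⟩ := hmin v hvX u huv hu
            have h3 := h1.trans_lt hv
            simp only [step, H, if_pos hv, if_pos h3]
            rw [← EReal.coe_add, EReal.coe_le_coe_iff]
            linarith [h2 h3]
          by_cases hvm : G.IsMin v
          · exact (G.best_le (G.step H v) hvm (hσ v hvX)).trans (key _ (hσ v hvX) fun _ => rfl)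
          · exact key _ (G.best_edge _ v) fun h => absurd h hvm
      · simp only [H, if_neg hv]
        exact le_top
    intro v hv
    refine (hH v).trans ?_
    simp only [H, if_pos hv]
    rw [EReal.coe_le_coe_iff]
    linarith [le_of_abs_le (hM v)]
  let τ : V → V := fun v => if 0 < g v then σ v else s v
  have hs : G.Legal s := fun v => G.best_edge _ v
  refine ⟨s, τ, hs, fun v => ?_, f, fun π hπ => ?_, fun π hπ => ?_⟩
  · by_cases hv : 0 < g v
    · simp only [τ, if_pos hv]
      exact hσ v fun h => (hgX v h).not_gt hv
    · simpa only [τ, if_neg hv] using hs v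
  · have key : ∀ k, (∀ i < k, π.vert i ∉ X) →
        ((π.wsum k : ℝ) : EReal) + f (π.vert k) ≤ f (π.vert 0) := by
      intro k
      induction k with
      | zero => simp [Path.wsum]
      | succ k ih =>
        intro hk
        refine le_trans ?_ (ih fun i hi => hk i (hi.trans k.lt_succ_self))
        rw [← coe_wsum_succ]
        refine add_le_add_right ?_ _
        rw [hfs _ (hk k k.lt_succ_self)]
        refine le_max_of_le_right ?_
        by_cases hv : G.IsMin (π.vert k)
        · rw [hπ k hv]
        · exact G.le_best (G.step f (π.vert k)) hv (π.adj k)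
    refine iSup_le fun ⟨k, hk⟩ => le_trans ?_ (key k hk)
    exact le_add_of_nonneg_right (hf0 _)
  · by_contra! hlt
    have hneg : ∀ k, (∀ i < k, π.vert i ∉ X) → g (π.vert k) < 0 := by
      intro k hk
      by_contra! hgk
      have hpos : ∀ m, 0 < g ((π.drop k).vert m) := by
        intro m
        induction m with
        | zero => exact lt_of_le_of_ne hgk (hg0 _).symm
        | succ m ih =>
          exact ih.trans_le (hmax _ (fun h => (hgX _ h).not_gt ih) _ ((π.drop k).adj m)
            fun hv => (hπ (k + m) hv).trans (if_pos ih))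
      have hX : ∀ m, (π.drop k).vert m ∉ X := fun m h => (hgX _ h).not_gt (hpos m)
      obtain ⟨C, hC⟩ := hge (π.drop k) hX fun m hv => (hπ (k + m) hv).trans (if_pos (hpos m))
      exact not_top_lt (supSigma_eq_top hk hX (hpos 0) hC ▸ hlt)
    have key : ∀ k, (∀ i < k, π.vert i ∉ X) ∧
        f (π.vert 0) ≤ ((π.wsum k : ℝ) : EReal) + f (π.vert k) := by
      intro k
      induction k with
      | zero => simp [Path.wsum]
      | succ k ih =>
        obtain ⟨hk, ih⟩ := ih
        have hne : f (π.vert k) ≠ 0 := by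
          intro h
          rw [h, add_zero] at ih
          exact ((ih.trans (le_supSigma hk)).trans_lt hlt).false
        have hkX : π.vert k ∉ X := fun h => hne (hfX _ h)
        refine ⟨fun i hi => ?_, ?_⟩
        · rcases Nat.lt_succ_iff_lt_or_eq.1 hi with h | rfl
          · exact hk i h
          · exact hkX
        · refine ih.trans ?_
          rw [← coe_wsum_succ]
          refine add_le_add_right ?_ _
          have h1 : f (π.vert k) = G.step f (π.vert k) (s (π.vert k)) := by
            rcases max_choice 0 (G.step f (π.vert k) (s (π.vert k))) with h | h
            · exact absurd ((hfs _ hkX).trans h) hne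
            · exact (hfs _ hkX).trans h
          rw [h1]
          by_cases hv : G.IsMin (π.vert k)
          · exact G.best_le (G.step f (π.vert k)) hv (π.adj k)
          · rw [hπ k hv]
            simp only [τ, if_neg (hneg k hk).not_gt, le_refl]
    refine hz.not_bounded π (a := -(M + M)) (b := M + M) (fun k => ?_) fun k => ?_
    · have h1 := ((hf0 _).trans (key k).2).trans
        (add_le_add_right (hfM _ (hneg k (key k).1)) _)
      rw [← EReal.coe_add] at h1
      have h2 := EReal.coe_nonneg.1 h1
      linarith
    · exact EReal.coe_le_coe_iff.1 (((le_supSigma (key k).1).trans hlt.le).trans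
        (hfM _ (hneg 0 (key 0).1)))

/-- The game with the roles of the players exchanged and opposite weights. -/
def dual (G : MPGame V) : MPGame V where
  E := G.E
  w v u := -G.w v u
  IsMin v := ¬ G.IsMin v
  sinkless := G.sinkless

/-- A path, viewed in the dual game. -/
def Path.dual {G : MPGame V} (π : G.Path) : G.dual.Path := ⟨π.vert, π.adj⟩

theorem Path.dual_wsum {G : MPGame V} (π : G.Path) (k : ℕ) : π.dual.wsum k = -π.wsum k :=
  Finset.sum_neg_distrib _

theorem NoZeroCycle.dual {G : MPGame V} (hz : G.NoZeroCycle) : G.dual.NoZeroCycle :=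
  fun π i j hij hv hw => hz ⟨π.vert, π.adj⟩ i j hij hv (by
    have h : ∀ k, π.wsum k = -Path.wsum (G := G) ⟨π.vert, π.adj⟩ k :=
      fun k => Path.dual_wsum (G := G) ⟨π.vert, π.adj⟩ k
    rwa [h, h, neg_inj] at hw)

theorem supSigma_dual {G : MPGame V} (X : Set V) (π : G.Path) :
    supSigma X π.dual = -infSigma X π := by
  refine Eq.trans ?_ (EReal.negOrderIso.map_iInf _).symm
  refine iSup_congr fun k => ?_
  rw [Path.dual_wsum, Int.cast_neg, EReal.coe_neg]
  rfl

theorem uniformlyDetermined_infSigma [Fintype V] (G : MPGame V) (hz : G.NoZeroCycle)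
    (X : Set V) : G.UniformlyDetermined (infSigma X) := by
  obtain ⟨σ, τ, hσ, hτ, f, hle, hge⟩ := G.dual.uniformlyDetermined_supSigma hz.dual X
  refine ⟨τ, σ, hτ, hσ, fun v => -f v, fun π hπ => ?_, fun π hπ => ?_⟩
  · have := hge π.dual fun i hi => hπ i (not_not.1 hi)
    rw [supSigma_dual] at this
    exact EReal.le_neg_of_le_neg this
  · have := hle π.dual hπ
    rw [supSigma_dual] at this
    exact EReal.neg_le_of_neg_le this

end MPGame

open MPGame in
/-- in a finite game with no zero cycle, optimal positional
strategies for `val ∈ {MP, supΣ^X, infΣ^X}` can be chosen uniformly in the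
starting vertex: there are a single Min-strategy `σ` and a single
Max-strategy `τ` realising the `val`-value of every vertex. -/
theorem statement1 {V : Type*} [Fintype V] (G : MPGame V)
    (hz : G.NoZeroCycle) (X : Set V)
    (val : G.Path → EReal)
    (hval : val = MPGame.MP ∨ val = MPGame.supSigma X ∨ val = MPGame.infSigma X) :
    ∃ σ τ : V → V, G.Legal σ ∧ G.Legal τ ∧ ∀ v : V,
      (⨆ π : {π : G.Path // π.vert 0 = v ∧ π.ConsMin σ}, val π.1) = G.minVal val v ∧
      (⨅ π : {π : G.Path // π.vert 0 = v ∧ π.ConsMax τ}, val π.1) = G.minVal val v := by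
  refine UniformlyDetermined.exists_optimal ?_
  rcases hval with rfl | rfl | rfl
  · exact G.uniformlyDetermined_MP
  · exact G.uniformlyDetermined_supSigma hz X
  · exact G.uniformlyDetermined_infSigma hz X
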